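/- arXiv:2403.02282 — 3 statements merged into one kernel-verified Lean document; each statement's English description precedes it below -/
import Mathlib

section
/- A dagger category D is minimal (i.e. the canonical surjection from unitary isomorphism classes of objects to isomorphism classes of objects is a bijection) if and only if every iso-positive morphism in D is aut-positive. -/
/-!
STATEMENT 2: A dagger category `D` is minimal (i.e. the canonical surjection from unitary
isomorphism classes of objects to isomorphism classes of objects is a bijection) if and only
if every iso-positive morphism in `D` is aut-positive.
-/

open CategoryTheory

universe v u

/-- A dagger category: a contravariant involution which is the identity on objects. -/
class DaggerCategory (D : Type u) [Category.{v} D] where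
  dag : ∀ {x y : D}, (x ⟶ y) → (y ⟶ x)
  dag_dag : ∀ {x y : D} (f : x ⟶ y), dag (dag f) = f
  dag_id : ∀ (x : D), dag (𝟙 x) = 𝟙 x
  dag_comp : ∀ {x y z : D} (f : x ⟶ y) (g : y ⟶ z), dag (f ≫ g) = dag g ≫ dag f

namespace DaggerCategory

variable {D : Type u} [Category.{v} D] [DaggerCategory D]

/-- A morphism is unitary if it is invertible with inverse its dagger. -/
def IsUnitary {x y : D} (f : x ⟶ y) : Prop :=
  f ≫ dag f = 𝟙 x ∧ dag f ≫ f = 𝟙 y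

/-- `f = g† ∘ g` for some isomorphism `g : c ⟶ c'`. -/
def IsoPositive {c : D} (f : c ⟶ c) : Prop :=
  ∃ (c' : D) (g : c ⟶ c'), IsIso g ∧ f = g ≫ dag g

/-- `f = g† ∘ g` for some automorphism `g : c ⟶ c`. -/
def AutPositive {c : D} (f : c ⟶ c) : Prop :=
  ∃ g : c ⟶ c, IsIso g ∧ f = g ≫ dag g

/-- Unitary isomorphism relation on objects. -/
def UnitaryRel (x y : D) : Prop := ∃ f : x ⟶ y, IsUnitary f

/-- Isomorphism relation on objects. -/
def IsoRel (x y : D) : Prop := Nonempty (x ≅ y)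

variable (D)

/-- Unitary isomorphism classes of objects, `π₀ᵁ(D)`. -/
def pi0U := Quot (UnitaryRel (D := D))

/-- Isomorphism classes of objects, `π₀(D)`. -/
def pi0 := Quot (IsoRel (D := D))

/-- The canonical map `π₀ᵁ(D) → π₀(D)`. -/
def pi0UToPi0 : pi0U D → pi0 D :=
  Quot.map id (fun _ _ hf => hf.elim fun f hf => ⟨⟨f, dag f, hf.1, hf.2⟩⟩)

/-- A dagger category is minimal if the canonical map `π₀ᵁ(D) → π₀(D)` is a bijection. -/
def Minimal : Prop := Function.Bijective (pi0UToPi0 D)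

end DaggerCategory

open DaggerCategory

theorem unitaryRel_equivalence (D : Type u) [Category.{v} D] [DaggerCategory D] :
    Equivalence (UnitaryRel (D := D)) where
  refl x := ⟨𝟙 x, by simp [IsUnitary, dag_id]⟩
  symm := by
    rintro x y ⟨f, h1, h2⟩
    exact ⟨dag f, by rw [dag_dag]; exact h2, by rw [dag_dag]; exact h1⟩
  trans := by
    rintro x y z ⟨f, h1, h2⟩ ⟨g, h3, h4⟩
    refine ⟨f ≫ g, ?_, ?_⟩
    · rw [dag_comp, Category.assoc, ← Category.assoc g, h3, Category.id_comp, h1]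
    · rw [dag_comp, Category.assoc, ← Category.assoc (dag f), h2, Category.id_comp, h4]

theorem isoRel_equivalence (D : Type u) [Category.{v} D] :
    Equivalence (IsoRel (D := D)) where
  refl x := ⟨Iso.refl x⟩
  symm := fun ⟨e⟩ => ⟨e.symm⟩
  trans := fun ⟨e⟩ ⟨f⟩ => ⟨e.trans f⟩

theorem minimal_iff_rel (D : Type u) [Category.{v} D] [DaggerCategory D] :
    Minimal D ↔ ∀ x y : D, IsoRel x y → UnitaryRel x y := by
  constructor
  · intro h x y hxy
    have h1 : pi0UToPi0 D (Quot.mk _ x) = pi0UToPi0 D (Quot.mk _ y) := Quot.sound hxy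
    have h2 := Quot.eqvGen_exact (h.1 h1)
    exact (unitaryRel_equivalence D).eqvGen_iff.1 h2
  · intro h
    refine ⟨?_, ?_⟩
    · rintro ⟨x⟩ ⟨y⟩ hxy
      exact Quot.sound (h x y ((isoRel_equivalence D).eqvGen_iff.1 (Quot.eqvGen_exact hxy)))
    · rintro ⟨x⟩
      exact ⟨Quot.mk _ x, rfl⟩

/-- A dagger category is minimal if and only if every iso-positive morphism is aut-positive. -/
theorem minimal_iff_isoPositive_autPositive
    (D : Type u) [Category.{v} D] [DaggerCategory D] :
    Minimal D ↔ ∀ (c : D) (f : c ⟶ c), IsoPositive f → AutPositive f := by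
  rw [minimal_iff_rel]
  constructor
  · rintro h c f ⟨c', g, hg, rfl⟩
    obtain ⟨u, h1, h2⟩ := h c' c ⟨(asIso g).symm⟩
    have hu : IsIso u := ⟨dag u, h1, h2⟩
    refine ⟨g ≫ u, inferInstance, ?_⟩
    rw [dag_comp, Category.assoc, ← Category.assoc u, h1, Category.id_comp]
  · rintro h x y ⟨e⟩
    obtain ⟨k, hk, hkk⟩ := h x (e.hom ≫ dag e.hom) ⟨y, e.hom, inferInstance, rfl⟩
    have h1 : (inv k ≫ e.hom) ≫ dag (inv k ≫ e.hom) = 𝟙 x := by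
      rw [dag_comp, Category.assoc, ← Category.assoc e.hom, hkk, Category.assoc, ← dag_comp,
        IsIso.inv_hom_id, dag_id, Category.comp_id, IsIso.inv_hom_id]
    refine ⟨inv k ≫ e.hom, h1, ?_⟩
    rw [← cancel_epi (inv k ≫ e.hom), ← Category.assoc, h1, Category.id_comp, Category.comp_id]
end

section
/- Let D be a dagger category equipped with a conservative dagger functor F : D → Hilb, where Hilb is the dagger category of finite-dimensional complex Hilbert spaces with the adjoint of linear maps as dagger. Suppose that every positive endomorphism f : c → c in D is end-positive. Then D is minimal. -/
/-!
STATEMENT 3: Let `D` be a dagger category equipped with a conservative dagger functor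
`F : D → Hilb`, where `Hilb` is the dagger category of finite-dimensional complex Hilbert
spaces with the adjoint of linear maps as dagger.  Suppose that every positive endomorphism
`f : c → c` in `D` is end-positive.  Then `D` is minimal.
-/

open CategoryTheory

universe v u

namespace DaggerCategory

variable {D : Type u} [Category.{v} D] [DaggerCategory D]

/-- `f = g† ∘ g` for some morphism `g : c ⟶ c'`. -/
def Positive {c : D} (f : c ⟶ c) : Prop :=
  ∃ (c' : D) (g : c ⟶ c'), f = g ≫ dag g

/-- `f = g† ∘ g` for some endomorphism `g : c ⟶ c`. -/
def EndPositive {c : D} (f : c ⟶ c) : Prop :=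
  ∃ g : c ⟶ c, f = g ≫ dag g

variable (D)

end DaggerCategory

open DaggerCategory

/-- The category of finite-dimensional complex Hilbert spaces. -/
structure Hilb : Type 1 where
  carrier : Type
  [nacg : NormedAddCommGroup carrier]
  [ips : InnerProductSpace ℂ carrier]
  [fd : FiniteDimensional ℂ carrier]

attribute [instance] Hilb.nacg Hilb.ips Hilb.fd

instance : Category Hilb where
  Hom X Y := X.carrier →ₗ[ℂ] Y.carrier
  id X := LinearMap.id
  comp f g := g.comp f
  id_comp f := LinearMap.comp_id f
  comp_id f := LinearMap.id_comp f
  assoc f g h := rfl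

/-- The dagger structure on `Hilb` given by the adjoint of linear maps. -/
noncomputable instance : DaggerCategory Hilb where
  dag {x y} f := LinearMap.adjoint (show x.carrier →ₗ[ℂ] y.carrier from f)
  dag_dag {x y} f := LinearMap.adjoint_adjoint (show x.carrier →ₗ[ℂ] y.carrier from f)
  dag_id x :=
    ((LinearMap.eq_adjoint_iff (LinearMap.id : x.carrier →ₗ[ℂ] x.carrier) LinearMap.id).mpr
      (fun _ _ => rfl)).symm
  dag_comp {x y z} f g :=
    LinearMap.adjoint_comp (show y.carrier →ₗ[ℂ] z.carrier from g)
      (show x.carrier →ₗ[ℂ] y.carrier from f)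

theorem hilb_isIso_of_comp {X : Hilb} {Y : Hilb} (g : X ⟶ X) (h : X ⟶ Y) (k : Y ⟶ X)
    (hk : (g ≫ h) ≫ k = 𝟙 X) : IsIso g := by
  have hinj : Function.Injective (show X.carrier →ₗ[ℂ] X.carrier from g) := by
    intro a b hab
    have e : ∀ z : X.carrier, (show Y.carrier →ₗ[ℂ] X.carrier from k)
        ((show X.carrier →ₗ[ℂ] Y.carrier from h)
          ((show X.carrier →ₗ[ℂ] X.carrier from g) z)) = z := fun z =>
      LinearMap.congr_fun (show ((show Y.carrier →ₗ[ℂ] X.carrier from k).comp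
        ((show X.carrier →ₗ[ℂ] Y.carrier from h).comp
          (show X.carrier →ₗ[ℂ] X.carrier from g))) = LinearMap.id from hk) z
    rw [← e a, ← e b, hab]
  let E := LinearEquiv.ofInjectiveEndo (show X.carrier →ₗ[ℂ] X.carrier from g) hinj
  refine ⟨⟨(E.symm : X.carrier →ₗ[ℂ] X.carrier), ?_, ?_⟩⟩
  · exact LinearMap.ext fun z => E.symm_apply_apply z
  · exact LinearMap.ext fun z => E.apply_symm_apply z

/-- If a dagger category admits a conservative dagger functor to `Hilb` and every positive
endomorphism is end-positive, then it is minimal. -/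
theorem minimal_of_conservative_dagger_functor_to_Hilb
    (D : Type u) [Category.{v} D] [DaggerCategory D]
    (F : D ⥤ Hilb)
    (hdagger : ∀ {x y : D} (f : x ⟶ y), F.map (dag f) = dag (F.map f))
    (hconservative : ∀ {x y : D} (f : x ⟶ y), IsIso (F.map f) → IsIso f)
    (hpos : ∀ (c : D) (f : c ⟶ c), Positive f → EndPositive f) :
    Minimal D := by
  have key : ∀ x y : D, IsoRel x y → UnitaryRel x y := by
    rintro x y ⟨f⟩
    obtain ⟨g, hg⟩ := hpos x (f.hom ≫ dag f.hom) ⟨y, f.hom, rfl⟩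
    have h1 : (g ≫ dag g) ≫ (dag f.inv ≫ f.inv) = 𝟙 x := by
      rw [← hg, Category.assoc, ← Category.assoc (dag f.hom), ← dag_comp, f.inv_hom_id, dag_id,
        Category.id_comp, f.hom_inv_id]
    haveI : IsIso g := hconservative g (hilb_isIso_of_comp _ (F.map (dag g))
      (F.map (dag f.inv ≫ f.inv)) (by rw [← F.map_comp, ← F.map_comp, h1, F.map_id]))
    have h2 : (inv g ≫ f.hom) ≫ dag (inv g ≫ f.hom) = 𝟙 x := by
      rw [dag_comp, Category.assoc, ← Category.assoc f.hom, hg, Category.assoc,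
        IsIso.inv_hom_id_assoc, ← dag_comp, IsIso.inv_hom_id, dag_id]
    refine ⟨inv g ≫ f.hom, h2, ?_⟩
    rw [← IsIso.inv_eq_of_hom_inv_id h2, IsIso.inv_hom_id]
  constructor
  · intro a b
    induction a using Quot.ind with | mk x =>
    induction b using Quot.ind with | mk y =>
    intro h
    have h' : Quot.mk (IsoRel (D := D)) x = Quot.mk IsoRel y := h
    have he : Equivalence (IsoRel (D := D)) :=
      ⟨fun x => ⟨Iso.refl x⟩, fun ⟨e⟩ => ⟨e.symm⟩, fun ⟨e⟩ ⟨e'⟩ => ⟨e.trans e'⟩⟩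
    exact Quot.sound (key x y (he.eqvGen_iff.mp (Quot.eqvGen_exact h')))
  · intro b
    induction b using Quot.ind with | mk y =>
    exact ⟨Quot.mk _ y, rfl⟩
end

section
/- If (V,⟨·,·⟩_V) and (W,⟨·,·⟩_W) are super Hilbert spaces, then the super vector space V ⊗ W with the pairing ⟨v₁ ⊗ w₁, v₂ ⊗ w₂⟩ := (-1)^{|v₂||w₁|} ⟨v₁,v₂⟩_V ⟨w₁,w₂⟩_W (for homogeneous vectors, extended sesquilinearly) is again a super Hilbert space. -/
open Complex TensorProduct

/-- Sesquilinearity (conjugate-linear in the first slot, linear in the second). -/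
structure IsSesq {V : Type} [AddCommGroup V] [Module ℂ V] (B : V → V → ℂ) : Prop where
  add_left : ∀ v v' w, B (v + v') w = B v w + B v' w
  add_right : ∀ v w w', B v (w + w') = B v w + B v w'
  smul_left : ∀ (a : ℂ) (v w), B (a • v) w = (starRingEnd ℂ) a * B v w
  smul_right : ∀ (a : ℂ) (v w), B v (a • w) = a * B v w

/-- A finite-dimensional super Hilbert space, modelled as a complex vector space `V` with a
parity (grading) involution `σ` (`σ v = v` for even, `σ v = -v` for odd vectors) and a
nondegenerate sesquilinear pairing `B` such that the even and odd parts are orthogonal,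
`⟨v,w⟩ = (-1)^{|v||w|} conj ⟨w,v⟩` on homogeneous vectors, `⟨v,v⟩ ≥ 0` for even `v`, and
`⟨v,v⟩ / i ≥ 0` for odd `v`. -/
structure IsSuperHilbert (V : Type) [AddCommGroup V] [Module ℂ V] [FiniteDimensional ℂ V]
    (σ : V →ₗ[ℂ] V) (B : V → V → ℂ) : Prop where
  sesq : IsSesq B
  invol : ∀ v, σ (σ v) = v
  orth : ∀ v w, σ v = v → σ w = -w → B v w = 0
  orth' : ∀ v w, σ v = v → σ w = -w → B w v = 0
  symm_even : ∀ v w, σ v = v → σ w = w → B v w = (starRingEnd ℂ) (B w v)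
  symm_odd : ∀ v w, σ v = -v → σ w = -w → B v w = - (starRingEnd ℂ) (B w v)
  pos_even : ∀ v, σ v = v → 0 ≤ (B v v).re ∧ (B v v).im = 0
  pos_odd : ∀ v, σ v = -v → 0 ≤ (B v v).im ∧ (B v v).re = 0
  nondeg : ∀ v, (∀ w, B v w = 0) → v = 0

/-!
STATEMENT 17: If `(V,⟨·,·⟩_V)` and `(W,⟨·,·⟩_W)` are super Hilbert spaces, then the super
vector space `V ⊗ W` (with the total grading `σ_V ⊗ σ_W`) with the pairing
`⟨v₁ ⊗ w₁, v₂ ⊗ w₂⟩ := (-1)^{|v₂||w₁|} ⟨v₁,v₂⟩_V ⟨w₁,w₂⟩_W` (for homogeneous vectors,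
extended sesquilinearly) is again a super Hilbert space.
-/

theorem superHilbert_of_basis {V : Type} [AddCommGroup V] [Module ℂ V] [FiniteDimensional ℂ V]
    {ι : Type} [Fintype ι] [DecidableEq ι]
    (σ : V →ₗ[ℂ] V) (B : V → V → ℂ) (hB : IsSesq B) (b : Module.Basis ι ℂ V) (p : ι → Bool)
    (hσ : ∀ i, σ (b i) = if p i then -b i else b i)
    (hb : ∀ i j, B (b i) (b j) = if i = j then (if p i then I else 1) else 0) :
    IsSuperHilbert V σ B := by
  let L : V →ₗ⋆[ℂ] V →ₗ[ℂ] ℂ := LinearMap.mk₂'ₛₗ (starRingEnd ℂ) (RingHom.id ℂ) B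
    hB.add_left (fun a v w => by simpa using hB.smul_left a v w) hB.add_right
    (fun a v w => by simpa using hB.smul_right a v w)
  have key : ∀ v w, B v w = ∑ i, (starRingEnd ℂ) (b.repr v i) * b.repr w i *
      (if p i then I else 1) := by
    intro v w
    change L v w = _
    conv_lhs => rw [← b.sum_repr v, ← b.sum_repr w]
    simp only [map_sum, LinearMap.sum_apply, LinearMap.map_smulₛₗ, LinearMap.smul_apply]
    have hL : ∀ i j, L (b i) (b j) = if i = j then (if p i then I else 1) else 0 := hb
    simp only [hL, smul_eq_mul, mul_ite, mul_zero, Finset.sum_ite_eq', Finset.sum_ite_eq,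
      Finset.mem_univ, if_true, RingHom.id_apply]
    refine Finset.sum_congr rfl fun i _ => ?_
    split_ifs <;> ring
  have hσr : ∀ v i, b.repr (σ v) i = if p i then - b.repr v i else b.repr v i := by
    intro v i
    conv_lhs => rw [← b.sum_repr v]
    simp only [map_sum, map_smul, hσ, Finsupp.finsetSum_apply, Finsupp.smul_apply]
    rw [Finset.sum_eq_single i]
    · split_ifs <;> simp
    · intro j _ hj
      split_ifs <;> simp [Finsupp.single_apply, hj]
    · simp
  have ev : ∀ v, σ v = v → ∀ i, p i = true → b.repr v i = 0 := by
    intro v hv i hi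
    have := hσr v i
    rw [hv, if_pos hi] at this
    exact self_eq_neg.mp this
  have od : ∀ v, σ v = -v → ∀ i, p i = false → b.repr v i = 0 := by
    intro v hv i hi
    have := hσr v i
    rw [hv, hi] at this
    simp at this
    exact neg_eq_self.mp this
  refine ⟨hB, ?_, ?_, ?_, ?_, ?_, ?_, ?_, ?_⟩
  · intro v
    apply b.ext_elem
    intro i
    rw [hσr, hσr]
    split_ifs <;> simp
  · intro v w hv hw
    rw [key]
    refine Finset.sum_eq_zero fun i _ => ?_
    cases h : p i
    · simp [od w hw i h]
    · simp [ev v hv i h]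
  · intro v w hv hw
    rw [key]
    refine Finset.sum_eq_zero fun i _ => ?_
    cases h : p i
    · simp [od w hw i h]
    · simp [ev v hv i h]
  · intro v w hv hw
    rw [key, key, map_sum]
    refine Finset.sum_congr rfl fun i _ => ?_
    cases h : p i
    · simp [mul_comm]
    · simp [ev v hv i h]
  · intro v w hv hw
    rw [key, key, map_sum, ← Finset.sum_neg_distrib]
    refine Finset.sum_congr rfl fun i _ => ?_
    cases h : p i
    · simp [od v hv i h]
    · simp [mul_comm]
  · intro v hv
    rw [key, Complex.re_sum, Complex.im_sum]
    refine ⟨Finset.sum_nonneg fun i _ => ?_, Finset.sum_eq_zero fun i _ => ?_⟩ <;>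
    cases h : p i
    · simp; nlinarith [sq_nonneg (b.repr v i).re, sq_nonneg (b.repr v i).im]
    · simp [ev v hv i h]
    · simp; ring
    · simp [ev v hv i h]
  · intro v hv
    rw [key, Complex.re_sum, Complex.im_sum]
    refine ⟨Finset.sum_nonneg fun i _ => ?_, Finset.sum_eq_zero fun i _ => ?_⟩ <;>
    cases h : p i
    · simp [od v hv i h]
    · simp; nlinarith [sq_nonneg (b.repr v i).re, sq_nonneg (b.repr v i).im]
    · simp [od v hv i h]
    · simp; ring
  · intro v hv
    apply b.ext_elem
    intro i
    have := hv (b i)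
    rw [key, Finset.sum_eq_single i] at this
    · cases h : p i <;> simpa [h] using this
    · intro j _ hj
      simp [Finsupp.single_apply, hj.symm]
    · simp

theorem basis_of_superHilbert {V : Type} [AddCommGroup V] [Module ℂ V] [FiniteDimensional ℂ V]
    (σ : V →ₗ[ℂ] V) (B : V → V → ℂ) (h : IsSuperHilbert V σ B) :
    ∃ (n : ℕ) (b : Module.Basis (Fin n) ℂ V) (p : Fin n → Bool),
    (∀ i, σ (b i) = if p i then -b i else b i) ∧
    (∀ i j, B (b i) (b j) = if i = j then (if p i then I else 1) else 0) := by
  have al := h.sesq.add_left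
  have ar := h.sesq.add_right
  have sl := h.sesq.smul_left
  have sr := h.sesq.smul_right
  have dec : ∀ v, ∃ a c, σ a = a ∧ σ c = -c ∧ v = a + c := by
    intro v
    refine ⟨(1/2 : ℂ) • (v + σ v), (1/2 : ℂ) • (v - σ v), ?_, ?_, ?_⟩
    · simp [h.invol, add_comm]
    · simp [h.invol, ← smul_neg]
    · module
  let T : V →ₗ[ℂ] V := (1/2 : ℂ) • (LinearMap.id + σ) - (I/2) • (LinearMap.id - σ)
  have Te : ∀ a, σ a = a → T a = a := by
    intro a ha; simp [T, ha]; module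
  have To : ∀ c, σ c = -c → T c = (-I) • c := by
    intro c hc; simp [T, hc]; module
  have Hd : ∀ a c a' c', σ a = a → σ c = -c → σ a' = a' → σ c' = -c' →
      B (a + c) (T (a' + c')) = B a a' - I * B c c' := by
    intro a c a' c' h1 h2 h3 h4
    rw [map_add, Te _ h3, To _ h4, al, ar, ar, sr, sr, h.orth a c' h1 h4, h.orth' a' c h3 h2]
    ring
  let core0 : PreInnerProductSpace.Core ℂ V :=
    { inner := fun v w => B v (T w)
      conj_inner_symm := by
        intro v w
        obtain ⟨a, c, h1, h2, rfl⟩ := dec v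
        obtain ⟨a', c', h3, h4, rfl⟩ := dec w
        change (starRingEnd ℂ) (B _ (T _)) = B _ (T _)
        rw [Hd _ _ _ _ h1 h2 h3 h4, Hd _ _ _ _ h3 h4 h1 h2, h.symm_even a a' h1 h3,
          h.symm_odd c c' h2 h4]
        simp
      re_inner_nonneg := by
        intro v
        obtain ⟨a, c, h1, h2, rfl⟩ := dec v
        change 0 ≤ (B _ (T _)).re
        rw [Hd _ _ _ _ h1 h2 h1 h2]
        have := (h.pos_even a h1).1
        have := (h.pos_odd c h2).1
        simp; linarith
      add_left := fun v v' w => al _ _ _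
      smul_left := fun v w a => sl _ _ _ }
  have Tsurj : ∀ w, ∃ u, T u = w := by
    intro w
    obtain ⟨a, c, h1, h2, rfl⟩ := dec w
    refine ⟨a + I • c, ?_⟩
    rw [map_add, map_smul, Te _ h1, To _ h2, smul_smul]
    simp
  let core : InnerProductSpace.Core ℂ V :=
    { core0 with
      definite := by
        intro v hv
        apply h.nondeg
        intro w
        obtain ⟨u, rfl⟩ := Tsurj w
        have cs := @InnerProductSpace.Core.inner_mul_inner_self_le ℂ V _ _ _ core0 v u
        change B v (T v) = 0 at hv
        change ‖B v (T u)‖ * ‖B u (T v)‖ ≤ (B v (T v)).re * (B u (T u)).re at cs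
        have e : (starRingEnd ℂ) (B u (T v)) = B v (T u) := core0.conj_inner_symm v u
        rw [hv, ← e] at cs
        rw [← e]
        rw [RCLike.norm_conj, Complex.zero_re, zero_mul] at cs
        have hz : ‖B u (T v)‖ = 0 := mul_self_eq_zero.mp (le_antisymm cs (mul_self_nonneg _))
        rw [norm_eq_zero.mp hz, map_zero] }
  letI : NormedAddCommGroup V := core.toNormedAddCommGroup
  letI : InnerProductSpace ℂ V := InnerProductSpace.ofCore core.toCore
  have hin : ∀ v w : V, inner ℂ v w = B v (T w) := fun v w => rfl
  have hs : σ.IsSymmetric := by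
    intro v w
    rw [hin, hin]
    obtain ⟨a, c, h1, h2, rfl⟩ := dec v
    obtain ⟨a', c', h3, h4, rfl⟩ := dec w
    have n1 : ∀ c, σ c = -c → σ (-c) = - -c := by intro c hc; simp [hc]
    have n2 : B (-c) c' = B c (-c') := by
      have := sl (-1) c c'
      have := sr (-1) c c'
      simp_all
    rw [map_add σ, map_add σ, h1, h2, h3, h4, Hd _ _ _ _ h1 (n1 _ h2) h3 h4,
      Hd _ _ _ _ h1 h2 h3 (n1 _ h4), n2]
  let b := hs.eigenvectorBasis rfl
  have hbv : ∀ i, σ (b i) = ((hs.eigenvalues rfl i : ℝ) : ℂ) • b i :=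
    fun i => hs.apply_eigenvectorBasis rfl i
  have hpm : ∀ i, hs.eigenvalues rfl i = 1 ∨ hs.eigenvalues rfl i = -1 := by
    intro i
    have h1 := h.invol (b i)
    rw [hbv, map_smul, hbv, smul_smul] at h1
    have hne : b i ≠ 0 := b.orthonormal.ne_zero i
    have h2 : (((hs.eigenvalues rfl i : ℝ) : ℂ) * ((hs.eigenvalues rfl i : ℝ) : ℂ)) = 1 :=
      smul_left_injective ℂ hne (by simpa using h1)
    exact mul_self_eq_one_iff.mp (by exact_mod_cast h2)
  classical
  have hp : ∀ i, σ (b i) = if decide (hs.eigenvalues rfl i = -1) then -b i else b i := by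
    intro i
    rw [hbv]
    rcases hpm i with e | e <;> rw [e] <;> norm_num
  refine ⟨_, b.toBasis, fun i => decide (hs.eigenvalues rfl i = -1), ?_, ?_⟩
  · intro i
    simpa using hp i
  · intro i j
    beta_reduce
    rw [OrthonormalBasis.coe_toBasis]
    have ho := orthonormal_iff_ite.mp b.orthonormal i j
    rw [hin] at ho
    have hi := hp i
    have hj := hp j
    have hij : i = j → decide (hs.eigenvalues rfl i = -1) = decide (hs.eigenvalues rfl j = -1) := by
      rintro rfl; rfl
    revert hi hj hij
    generalize decide (hs.eigenvalues rfl i = -1) = x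
    generalize decide (hs.eigenvalues rfl j = -1) = y
    intro hi hj hij
    cases x <;> cases y <;> simp only [Bool.false_eq_true, if_true, if_false] at hi hj ⊢
    · rw [Te _ hj] at ho; exact ho
    · rw [h.orth _ _ hi hj, if_neg (by intro e; simpa using hij e)]
    · rw [h.orth' _ _ hj hi, if_neg (by intro e; simpa using hij e)]
    · rw [To _ hj, sr] at ho
      have : B (b i) (b j) = I * (-I * B (b i) (b j)) := by
        rw [← mul_assoc]; simp
      rw [this, ho]; simp

theorem tensor_of_superHilbert
    (V W : Type) [AddCommGroup V] [Module ℂ V] [FiniteDimensional ℂ V]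
    [AddCommGroup W] [Module ℂ W] [FiniteDimensional ℂ W]
    (σV : V →ₗ[ℂ] V) (BV : V → V → ℂ) (σW : W →ₗ[ℂ] W) (BW : W → W → ℂ)
    (hV : IsSuperHilbert V σV BV) (hW : IsSuperHilbert W σW BW)
    (BT : TensorProduct ℂ V W → TensorProduct ℂ V W → ℂ)
    (hsesq : IsSesq BT)
    -- `BT` is given on pure tensors by the Koszul-signed product of the pairings
    (hform : ∀ (v₁ v₂ : V) (w₁ w₂ : W) (bo co : Bool),
      σW w₁ = (if bo then -w₁ else w₁) → σV v₂ = (if co then -v₂ else v₂) →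
      BT (v₁ ⊗ₜ[ℂ] w₁) (v₂ ⊗ₜ[ℂ] w₂)
        = (if bo && co then -1 else 1) * BV v₁ v₂ * BW w₁ w₂) :
    IsSuperHilbert (TensorProduct ℂ V W) (TensorProduct.map σV σW) BT := by
  classical
  obtain ⟨n, b, p, hb1, hb2⟩ := basis_of_superHilbert σV BV hV
  obtain ⟨m, c, q, hc1, hc2⟩ := basis_of_superHilbert σW BW hW
  refine superHilbert_of_basis _ BT hsesq (b.tensorProduct c)
    (fun i => xor (p i.1) (q i.2)) ?_ ?_
  · rintro ⟨i, j⟩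
    rw [Module.Basis.tensorProduct_apply, TensorProduct.map_tmul, hb1, hc1]
    cases p i <;> cases q j <;> simp [TensorProduct.neg_tmul, TensorProduct.tmul_neg]
  · rintro ⟨i, j⟩ ⟨i', j'⟩
    rw [Module.Basis.tensorProduct_apply, Module.Basis.tensorProduct_apply,
      hform _ _ _ _ (q j) (p i') (hc1 j) (hb1 i'), hb2, hc2]
    by_cases h1 : i = i'
    · subst h1
      by_cases h2 : j = j'
      · subst h2
        cases p i <;> cases q j <;> simp
      · simp [h2]
    · simp [h1]
end
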